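/- arXiv:2110.08972 — 2 statements merged into one kernel-verified Lean document; each statement's English description precedes it below -/
import Mathlib

section
/- Let q be a prime power and F a finite field with q elements. If q is odd, there exists an intersecting set of affine maps in AGL(2,F), for the action on the affine lines of F², of size q²(q−1)(3q−5)/2. If q is even, there exists such an intersecting set of size q²(q−1)(3q−4)/2. In particular, for q ≥ 4 these sets are larger than the stabilizer of a line, which has size q²(q−1)², so AGL(2,q) acting on lines does not have the EKR property. -/
/-- `ℓ ⊆ F²` is an affine line if `ℓ = {u + t • w : t ∈ F}` for some `u, w` with `w ≠ 0`. -/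
def IsAffineLine {F : Type*} [Field F] (ℓ : Set (Fin 2 → F)) : Prop :=
  ∃ u w : Fin 2 → F, w ≠ 0 ∧ ℓ = {p | ∃ t : F, p = u + t • w}

/-!
Affine maps `v ↦ M v + z` and `v ↦ N v + z'` send a common line to the same line, whatever `z` and
`z'` are, as soon as `M = N` or `M⁻¹ N` has an eigenvalue `l ≠ 1` in `F`: a left kernel vector `a`
of `N - l M` defines a parallel class `a ⬝ᵥ y = c`, and `l ≠ 1` makes it possible to solve for the
member of that class which has the same preimage under both maps.

Number the points `(1,0)`, `(0,1)`, `(1,1)` of the projective line cyclically, and let a matrix of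
type `i` have the `i`-th point as eigenvector for `s` and the next one for `r`. Two matrices of the
same type with parameters `(s, r)`, `(s', r')` have relative eigenvalues `s' / s`, `r' / r`; for
different types these are `s' / r`, `r' / s`. Hence the only bad pairs are those of different types
with `(s', r') = (r, s)`. Ordering `Fˣ` arbitrarily, take `s ≤ r` for one type and `s < r` for the
two others: no bad pair is left, and all translations `z` can be allowed. This gives
`q² (q - 1) (3 q - 4) / 2` maps for every `q`; for odd `q` a subset has the smaller size wanted.
-/

open Matrix

section Intersecting

/-- The self-map `v ↦ M v + z` of `Rⁿ`, an element of `AGL(n, R)` when `M` is invertible. -/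
def matrixAffineMap {n R : Type*} [Fintype n] [CommRing R] (M : Matrix n n R) (z : n → R) :
    (n → R) → (n → R) :=
  fun v => M *ᵥ v + z

theorem matrixAffineMap_surjective {n R : Type*} [Fintype n] [DecidableEq n] [CommRing R]
    {M : Matrix n n R} (hM : IsUnit M.det) (z : n → R) :
    Function.Surjective (matrixAffineMap M z) :=
  (add_right_surjective z).comp
    (mulVec_surjective_iff_isUnit.2 ((isUnit_iff_isUnit_det M).2 hM))

theorem matrixAffineMap_injective2 {n R : Type*} [Fintype n] [CommRing R] :
    Function.Injective2 (matrixAffineMap : Matrix n n R → (n → R) → _) := by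
  intro M N z z' h
  have hz : z = z' := by simpa [matrixAffineMap] using congrFun h 0
  refine ⟨mulVec_injective (funext fun v => ?_), hz⟩
  simpa [matrixAffineMap, hz] using congrFun h v

theorem dotProduct_matrixAffineMap {n R : Type*} [Fintype n] [CommRing R] (M : Matrix n n R)
    (a z v : n → R) : a ⬝ᵥ matrixAffineMap M z v = a ᵥ* M ⬝ᵥ v + a ⬝ᵥ z := by
  rw [matrixAffineMap, dotProduct_add, dotProduct_mulVec]

variable {F : Type*} [Field F]

/-- Two self-maps of the plane intersect, for the action on affine lines, if they have the same
image on some line. -/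
def IntersectOnLine (f g : (Fin 2 → F) → (Fin 2 → F)) : Prop :=
  ∃ ℓ : Set (Fin 2 → F), IsAffineLine ℓ ∧ f '' ℓ = g '' ℓ

/-- An intersecting set of elements of `AGL(2, F)` for the action on affine lines, the group being
encoded as a set of self-maps of `F²`. -/
structure IsIntersectingFamily (T : Set ((Fin 2 → F) → (Fin 2 → F))) : Prop where
  affine : ∀ f ∈ T, ∃ (M : GL (Fin 2) F) (z : Fin 2 → F),
    f = matrixAffineMap (M : Matrix (Fin 2) (Fin 2) F) z
  intersect : ∀ f ∈ T, ∀ g ∈ T, IntersectOnLine f g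

theorem IsIntersectingFamily.mono {S T : Set ((Fin 2 → F) → (Fin 2 → F))}
    (hT : IsIntersectingFamily T) (hST : S ⊆ T) : IsIntersectingFamily S where
  affine f hf := hT.affine f (hST hf)
  intersect f hf g hg := hT.intersect f (hST hf) g (hST hg)

theorem isAffineLine_setOf_dotProduct_eq {b : Fin 2 → F} (hb : b ≠ 0) (d : F) :
    IsAffineLine {x | b ⬝ᵥ x = d} := by
  obtain ⟨i, hi⟩ := Function.ne_iff.1 hb
  obtain ⟨c, hc⟩ : ∃ c, b ⬝ᵥ c = 1 := ⟨Pi.single i (b i)⁻¹, by simpa using mul_inv_cancel₀ hi⟩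
  refine ⟨d • c, ![-b 1, b 0], fun hw => hb ?_, ?_⟩
  · have hw₀ : -b 1 = 0 := congrFun hw 0
    have hw₁ : b 0 = 0 := congrFun hw 1
    ext j
    fin_cases j
    exacts [hw₁, neg_eq_zero.1 hw₀]
  · ext x
    simp only [Set.mem_ofPred_eq, vec2_dotProduct, funext_iff, Fin.forall_fin_two] at hc ⊢
    simp only [Pi.add_apply, Pi.smul_apply, smul_eq_mul, cons_val_zero, cons_val_one]
    constructor
    · intro hx
      -- The parameter is the area form `det (c, x)`, since `det (c, ![-b 1, b 0]) = b ⬝ᵥ c = 1`.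
      refine ⟨c 0 * x 1 - c 1 * x 0, ?_, ?_⟩
      · linear_combination c 0 * hx - x 0 * hc
      · linear_combination c 1 * hx - x 1 * hc
    · rintro ⟨t, h0, h1⟩
      linear_combination b 0 * h0 + b 1 * h1 + d * hc

variable {M N : Matrix (Fin 2) (Fin 2) F}

theorem isAffineLine_preimage_matrixAffineMap (hM : M.det ≠ 0) (z : Fin 2 → F) {a : Fin 2 → F}
    (ha : a ≠ 0) (c : F) : IsAffineLine (matrixAffineMap M z ⁻¹' {y | a ⬝ᵥ y = c}) := by
  have haM : a ᵥ* M ≠ 0 := fun h => hM (exists_vecMul_eq_zero_iff.1 ⟨a, ha, h⟩)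
  simpa only [Set.preimage_ofPred_eq, dotProduct_matrixAffineMap, ← eq_sub_iff_add_eq]
    using isAffineLine_setOf_dotProduct_eq haM (c - a ⬝ᵥ z)

theorem intersectOnLine_of_vecMul_eq_smul (hM : M.det ≠ 0) (hN : N.det ≠ 0) {z z' a : Fin 2 → F}
    (ha : a ≠ 0) {l c : F} (hl : l ≠ 0) (hMN : a ᵥ* N = l • (a ᵥ* M))
    (hz : a ⬝ᵥ z' - c = l * (a ⬝ᵥ z - c)) :
    IntersectOnLine (matrixAffineMap M z) (matrixAffineMap N z') := by
  have hscale : ∀ x, a ⬝ᵥ matrixAffineMap N z' x - c = l * (a ⬝ᵥ matrixAffineMap M z x - c) := by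
    intro x
    rw [dotProduct_matrixAffineMap, dotProduct_matrixAffineMap, hMN, smul_dotProduct, smul_eq_mul]
    linear_combination hz
  have hpre : matrixAffineMap N z' ⁻¹' {y | a ⬝ᵥ y = c} =
      matrixAffineMap M z ⁻¹' {y | a ⬝ᵥ y = c} := by
    ext x
    rw [Set.mem_preimage, Set.mem_preimage, Set.mem_ofPred_eq, Set.mem_ofPred_eq, ← sub_eq_zero,
      hscale, mul_eq_zero_iff_left hl, sub_eq_zero]
  refine ⟨_, isAffineLine_preimage_matrixAffineMap hM z ha c, ?_⟩
  rw [Set.image_preimage_eq _ (matrixAffineMap_surjective hM.isUnit z), ← hpre,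
    Set.image_preimage_eq _ (matrixAffineMap_surjective hN.isUnit z')]

theorem intersectOnLine_of_eq (hM : M.det ≠ 0) (z z' : Fin 2 → F) :
    IntersectOnLine (matrixAffineMap M z) (matrixAffineMap M z') := by
  obtain ⟨a, ha, haz⟩ := exists_ne_zero_dotProduct_eq_zero (z' - z)
  rw [dotProduct_sub, sub_eq_zero] at haz
  exact intersectOnLine_of_vecMul_eq_smul hM hM ha (c := 0) one_ne_zero (one_smul F _).symm
    (by rw [haz, one_mul])

theorem intersectOnLine_of_det_sub_smul_eq_zero (hM : M.det ≠ 0) (hN : N.det ≠ 0)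
    (z z' : Fin 2 → F) {l : F} (hl : l ≠ 1) (hdet : (N - l • M).det = 0) :
    IntersectOnLine (matrixAffineMap M z) (matrixAffineMap N z') := by
  have hl₀ : l ≠ 0 := by
    rintro rfl
    exact hN (by simpa using hdet)
  obtain ⟨a, ha, hMN⟩ := exists_vecMul_eq_zero_iff.2 hdet
  rw [vecMul_sub, vecMul_smul, sub_eq_zero] at hMN
  refine intersectOnLine_of_vecMul_eq_smul hM hN ha
    (c := (a ⬝ᵥ z' - l * (a ⬝ᵥ z)) / (1 - l)) hl₀ hMN ?_
  field_simp [sub_ne_zero.2 hl.symm]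
  ring

theorem intersectOnLine_of_det_sub_smul_eq_mul (hM : M.det ≠ 0) (hN : N.det ≠ 0)
    (z z' : Fin 2 → F) {α β α' β' : F} (hα : α ≠ 0) (hβ : β ≠ 0)
    (hdet : ∀ l : F, (N - l • M).det = (α' - l * α) * (β' - l * β)) (hne : (α', β') ≠ (α, β)) :
    IntersectOnLine (matrixAffineMap M z) (matrixAffineMap N z') := by
  by_cases h : α' = α
  · have hβ' : β' ≠ β := fun h' => hne (Prod.ext h h')
    refine intersectOnLine_of_det_sub_smul_eq_zero hM hN z z' (div_ne_one_of_ne hβ') ?_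
    rw [hdet, div_mul_cancel₀ _ hβ, sub_self, mul_zero]
  · refine intersectOnLine_of_det_sub_smul_eq_zero hM hN z z' (div_ne_one_of_ne h) ?_
    rw [hdet, div_mul_cancel₀ _ hα, sub_self, zero_mul]

end Intersecting

section TypedMatrix

variable {R : Type*} [CommRing R]

/-- The matrix of type `i` with parameters `s` and `r`: of the vectors `(1,0)`, `(0,1)`, `(1,1)`,
numbered `0, 1, 2` cyclically, the `i`-th is an eigenvector for `s` and the next one for `r`. -/
def typedMatrix (i : Fin 3) (s r : R) : Matrix (Fin 2) (Fin 2) R :=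
  ![!![s, 0; 0, r], !![r, 0; r - s, s], !![r, s - r; 0, s]] i

theorem det_typedMatrix (i : Fin 3) (s r : R) : (typedMatrix i s r).det = s * r := by
  fin_cases i <;> simp [typedMatrix, mul_comm]

theorem det_typedMatrix_sub_smul (i : Fin 3) (s r s' r' l : R) :
    (typedMatrix i s' r' - l • typedMatrix i s r).det = (s' - l * s) * (r' - l * r) := by
  fin_cases i <;> simp [typedMatrix, det_fin_two] <;> ring

-- Two different types share an eigenvector, which belongs to `s` in one and to `r` in the other.
theorem det_typedMatrix_sub_smul_of_ne {i j : Fin 3} (hij : i ≠ j) (s r s' r' l : R) :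
    (typedMatrix j s' r' - l • typedMatrix i s r).det = (s' - l * r) * (r' - l * s) := by
  fin_cases i <;> fin_cases j <;> first
    | exact absurd rfl hij
    | (simp [typedMatrix, det_fin_two] <;> ring)

theorem typedMatrix_inj {i j : Fin 3} {s r s' r' : R} (hi : i ≠ 0 → s ≠ r) (hj : j ≠ 0 → s' ≠ r') :
    typedMatrix i s r = typedMatrix j s' r' ↔ i = j ∧ s = s' ∧ r = r' := by
  refine ⟨fun h => ?_, by rintro ⟨rfl, rfl, rfl⟩; rfl⟩
  have hentry := fun a b => congrFun (congrFun h a) b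
  fin_cases i <;> fin_cases j <;> simp [typedMatrix, Fin.forall_fin_two] at hentry hi hj ⊢ <;> grind

end TypedMatrix

section OrderedTriples

variable (α : Type*) [LinearOrder α]

/-- The admissible parameters of a matrix: a type together with a pair `s ≤ r`, where `s = r` is
allowed in type `0` only. -/
def orderedTriples : Set (Fin 3 × α × α) :=
  {x | x.2.1 ≤ x.2.2 ∧ (x.1 ≠ 0 → x.2.1 ≠ x.2.2)}

variable {α} in
theorem ne_swap_of_mem_orderedTriples {i j : Fin 3} (hij : i ≠ j) {s r s' r' : α}
    (h : (i, s, r) ∈ orderedTriples α) (h' : (j, s', r') ∈ orderedTriples α) :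
    (s', r') ≠ (r, s) := by
  rintro ⟨⟩
  have hsr : s = r := le_antisymm h.1 h'.1
  have hi : i = 0 := not_not.1 fun hi => h.2 hi hsr
  have hj : j = 0 := not_not.1 fun hj => h'.2 hj hsr.symm
  exact hij (hi.trans hj.symm)

theorem orderedTriples_inter_preimage_swap :
    orderedTriples α ∩ Prod.map id Prod.swap ⁻¹' orderedTriples α = {0} ×ˢ Set.diagonal α := by
  ext ⟨i, s, r⟩
  simp only [orderedTriples, Set.mem_inter_iff, Set.mem_preimage, Set.mem_ofPred_eq, Set.mem_prod,
    Set.mem_singleton_iff, Set.mem_diagonal_iff, Prod.map_apply, Prod.swap_prod_mk, id_eq]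
  grind

theorem compl_orderedTriples_union_preimage_swap :
    (orderedTriples α ∪ Prod.map id Prod.swap ⁻¹' orderedTriples α)ᶜ =
      {0}ᶜ ×ˢ Set.diagonal α := by
  ext ⟨i, s, r⟩
  simp only [orderedTriples, Set.mem_union, Set.mem_preimage, Set.mem_ofPred_eq, Set.mem_prod,
    Set.mem_compl_iff, Set.mem_singleton_iff, Set.mem_diagonal_iff, Prod.map_apply,
    Prod.swap_prod_mk, id_eq]
  grind

theorem two_mul_ncard_orderedTriples [Finite α] :
    2 * (orderedTriples α).ncard = Nat.card α * (3 * Nat.card α - 1) := by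
  let swapped : Set (Fin 3 × α × α) := Prod.map id Prod.swap ⁻¹' orderedTriples α
  have hswapped : swapped.ncard = (orderedTriples α).ncard :=
    Set.ncard_preimage_of_injective_subset_range
      (Function.injective_id.prodMap Prod.swap_injective)
      (by simp [Function.surjective_id.prodMap Prod.swap_surjective |>.range_eq])
  have hdiag : (Set.diagonal α).ncard = Nat.card α := by
    rw [← Set.range_diag]
    exact Set.ncard_range_of_injective Function.diag_injective
  have hinter : (orderedTriples α ∩ swapped).ncard = Nat.card α := by
    rw [orderedTriples_inter_preimage_swap, Set.ncard_prod, Set.ncard_singleton, hdiag, one_mul]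
  have hcompl : (orderedTriples α ∪ swapped)ᶜ.ncard = 2 * Nat.card α := by
    rw [compl_orderedTriples_union_preimage_swap, Set.ncard_prod, hdiag, Set.ncard_compl,
      Set.ncard_singleton, Nat.card_fin]
  have hunion := Set.ncard_add_ncard_compl (orderedTriples α ∪ swapped)
  have hsum := Set.ncard_union_add_ncard_inter (orderedTriples α) swapped
  rw [Nat.card_prod, Nat.card_prod, Nat.card_fin] at hunion
  rw [Nat.mul_sub, mul_one, mul_left_comm]
  omega

end OrderedTriples

section TypedFamily

variable {F : Type*} [Field F]

/-- The affine map with matrix of type `x.1.1` and parameters `x.1.2`, followed by the translation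
by `x.2`. -/
def typedAffineMap (x : (Fin 3 × Fˣ × Fˣ) × (Fin 2 → F)) : (Fin 2 → F) → (Fin 2 → F) :=
  matrixAffineMap (typedMatrix x.1.1 (x.1.2.1 : F) x.1.2.2) x.2

theorem det_typedMatrix_ne_zero (i : Fin 3) (s r : Fˣ) : (typedMatrix i (s : F) r).det ≠ 0 := by
  rw [det_typedMatrix]
  exact mul_ne_zero s.ne_zero r.ne_zero

theorem intersectOnLine_typedAffineMap {i j : Fin 3} {s r s' r' : Fˣ}
    (h : i ≠ j → (s', r') ≠ (r, s)) (z z' : Fin 2 → F) :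
    IntersectOnLine (typedAffineMap ((i, s, r), z)) (typedAffineMap ((j, s', r'), z')) := by
  have hM := det_typedMatrix_ne_zero i s r
  have hN := det_typedMatrix_ne_zero j s' r'
  rcases eq_or_ne i j with rfl | hij
  · by_cases heq : (s', r') = (s, r)
    · obtain ⟨rfl, rfl⟩ := Prod.ext_iff.1 heq
      exact intersectOnLine_of_eq hM z z'
    · exact intersectOnLine_of_det_sub_smul_eq_mul hM hN z z' s.ne_zero r.ne_zero
        (det_typedMatrix_sub_smul i _ _ _ _) (by simpa [Units.val_inj] using heq)
  · exact intersectOnLine_of_det_sub_smul_eq_mul hM hN z z' r.ne_zero s.ne_zero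
      (det_typedMatrix_sub_smul_of_ne hij _ _ _ _) (by simpa [Units.val_inj] using h hij)

variable [LinearOrder Fˣ]

variable (F) in
/-- The affine maps with admissible matrix parameters and arbitrary translation part. -/
def typedFamily : Set ((Fin 2 → F) → (Fin 2 → F)) :=
  typedAffineMap '' (orderedTriples Fˣ ×ˢ Set.univ)

theorem isIntersectingFamily_typedFamily : IsIntersectingFamily (typedFamily F) where
  affine := by
    rintro _ ⟨⟨⟨i, s, r⟩, z⟩, -, rfl⟩
    exact ⟨GeneralLinearGroup.mkOfDetNeZero _ (det_typedMatrix_ne_zero i s r), z, rfl⟩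
  intersect := by
    rintro _ ⟨⟨⟨i, s, r⟩, z⟩, ⟨h, -⟩, rfl⟩ _ ⟨⟨⟨j, s', r'⟩, z'⟩, ⟨h', -⟩, rfl⟩
    exact intersectOnLine_typedAffineMap (fun hij => ne_swap_of_mem_orderedTriples hij h h') z z'

theorem injOn_typedAffineMap : Set.InjOn (typedAffineMap (F := F))
    (orderedTriples Fˣ ×ˢ Set.univ) := by
  rintro ⟨⟨i, s, r⟩, z⟩ ⟨h, -⟩ ⟨⟨j, s', r'⟩, z'⟩ ⟨h', -⟩ heq
  obtain ⟨hM, rfl⟩ := matrixAffineMap_injective2 heq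
  rw [typedMatrix_inj (fun hi => Units.val_injective.ne (h.2 hi))
    (fun hj => Units.val_injective.ne (h'.2 hj)), Units.val_inj, Units.val_inj] at hM
  obtain ⟨rfl, rfl, rfl⟩ := hM
  rfl

theorem two_mul_ncard_typedFamily [Finite F] :
    2 * (typedFamily F).ncard = Nat.card F ^ 2 * (Nat.card F - 1) * (3 * Nat.card F - 4) := by
  have hsub : 3 * (Nat.card F - 1) - 1 = 3 * Nat.card F - 4 := by omega
  rw [typedFamily, injOn_typedAffineMap.ncard_image, Set.ncard_prod, Set.ncard_univ, ← mul_assoc,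
    two_mul_ncard_orderedTriples, Nat.card_units, hsub, Nat.card_fun, Nat.card_fin]
  ring

end TypedFamily

theorem sq_mul_sq_lt_of_two_mul_eq {q k t : ℕ} (hq : 1 < q) (hk : 2 * (q - 1) < k)
    (ht : 2 * t = q ^ 2 * (q - 1) * k) : q ^ 2 * (q - 1) ^ 2 < t := by
  have hpos : 0 < q ^ 2 * (q - 1) := Nat.mul_pos (by positivity) (by omega)
  refine Nat.lt_of_mul_lt_mul_left (a := 2) ?_
  calc 2 * (q ^ 2 * (q - 1) ^ 2) = q ^ 2 * (q - 1) * (2 * (q - 1)) := by ring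
    _ < q ^ 2 * (q - 1) * k := Nat.mul_lt_mul_of_pos_left hk hpos
    _ = 2 * t := ht.symm

theorem agl2_large_intersecting_set_general (F : Type*) [Field F] [Finite F] :
    ∃ T : Set ((Fin 2 → F) → (Fin 2 → F)), IsIntersectingFamily T ∧
      2 * T.ncard = Nat.card F ^ 2 * (Nat.card F - 1) * (3 * Nat.card F - 4) ∧
      (3 ≤ Nat.card F → Nat.card F ^ 2 * (Nat.card F - 1) ^ 2 < T.ncard) := by
  let : LinearOrder Fˣ := LinearOrder.lift' _ (Finite.equivFin Fˣ).injective
  have hcard := two_mul_ncard_typedFamily (F := F)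
  exact ⟨typedFamily F, isIntersectingFamily_typedFamily, hcard,
    fun hq => sq_mul_sq_lt_of_two_mul_eq (by omega) (by omega) hcard⟩

/-- **AGL(2,q) on lines does not have the EKR property (Theorem 5.9).**  There is an
intersecting set of affine maps, for the action on affine lines, of size
`q²(q-1)(3q-5)/2` when `q` is odd and `q²(q-1)(3q-4)/2` when `q` is even; for `q ≥ 4`
these are larger than a line stabilizer, which has size `q²(q-1)²`. -/
theorem agl2_large_intersecting_set (q : ℕ) (hq : IsPrimePow q)
    (F : Type*) [Field F] [Fintype F] (hF : Fintype.card F = q) :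
    (Odd q → ∃ T : Set ((Fin 2 → F) → (Fin 2 → F)),
      (∀ f ∈ T, ∃ (M : GL (Fin 2) F) (z : Fin 2 → F),
        f = fun v => (M : Matrix (Fin 2) (Fin 2) F).mulVec v + z) ∧
      (∀ f ∈ T, ∀ g ∈ T, ∃ ℓ : Set (Fin 2 → F), IsAffineLine ℓ ∧ f '' ℓ = g '' ℓ) ∧
      2 * T.ncard = q ^ 2 * (q - 1) * (3 * q - 5) ∧
      (4 ≤ q → q ^ 2 * (q - 1) ^ 2 < T.ncard)) ∧
    (Even q → ∃ T : Set ((Fin 2 → F) → (Fin 2 → F)),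
      (∀ f ∈ T, ∃ (M : GL (Fin 2) F) (z : Fin 2 → F),
        f = fun v => (M : Matrix (Fin 2) (Fin 2) F).mulVec v + z) ∧
      (∀ f ∈ T, ∀ g ∈ T, ∃ ℓ : Set (Fin 2 → F), IsAffineLine ℓ ∧ f '' ℓ = g '' ℓ) ∧
      2 * T.ncard = q ^ 2 * (q - 1) * (3 * q - 4) ∧
      (4 ≤ q → q ^ 2 * (q - 1) ^ 2 < T.ncard)) := by
  rw [← Nat.card_eq_fintype_card] at hF
  subst hF
  obtain ⟨T, hT, hcard, hlt⟩ := agl2_large_intersecting_set_general F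
  refine ⟨fun hodd => ?_, fun _ =>
    ⟨T, hT.affine, hT.intersect, hcard, fun hq => hlt (by omega)⟩⟩
  obtain ⟨m, hm⟩ : 2 ∣ Nat.card F ^ 2 * (Nat.card F - 1) * (3 * Nat.card F - 5) :=
    ((hodd.tsub_odd odd_one).two_dvd.mul_left _).mul_right _
  have hle : 2 * m ≤ 2 * T.ncard := by
    rw [← hm, hcard]
    gcongr
    omega
  obtain ⟨S, hST, rfl⟩ := Set.exists_subset_card_eq (Nat.le_of_mul_le_mul_left hle two_pos)
  have hS := hT.mono hST
  exact ⟨S, hS.affine, hS.intersect, hm.symm,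
    fun hq => sq_mul_sq_lt_of_two_mul_eq (by omega) (by omega) hm.symm⟩
end

section
/- Let q be a prime power and F a finite field with q elements. If 𝓕 is an intersecting subset of AGL(2,F) for its action on the affine lines of F² (i.e., for any two elements f, g ∈ 𝓕 there exists an affine line ℓ with f(ℓ) = g(ℓ)), then |𝓕| ≤ q³(q−1)². -/
/-!
If two affine maps send a line to the same line, their linear parts agree on its direction up to a
scalar. Multiplication by the nonzero elements of a degree-`n` field extension of `F` gives a
subgroup `S` of `GL(n,F)` of order `qⁿ - 1`, and an element of `S` with an eigenvector in `Fⁿ` is a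
scalar. Hence, among the maps with a given translation part, the linear parts of an intersecting
family meet each left coset of `S` in at most `q - 1` elements.
-/

open Matrix Module

section Counting

theorem ncard_le_mul_card_of_ncard_fiber_le {α β : Type*} [Finite β] (f : α → β) (s : Set α)
    {n : ℕ} (hn : ∀ b, {a ∈ s | f a = b}.ncard ≤ n) : s.ncard ≤ n * Nat.card β := by
  classical
  rcases s.finite_or_infinite with hs | hs
  · have := Fintype.ofFinite β
    lift s to Finset α using hs
    rw [Set.ncard_coe_finset, Nat.card_eq_fintype_card]
    refine Finset.card_le_mul_card_image_of_maps_to (fun a _ ↦ Finset.mem_univ (f a)) n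
      fun b _ ↦ ?_
    simpa [← Set.ncard_coe_finset] using hn b
  · simp [hs.ncard]

theorem ncard_le_card_mul_index {G : Type*} [Group G] (H K : Subgroup G) [H.FiniteIndex]
    [Finite K] {A : Set G} (hA : ∀ a ∈ A, ∀ b ∈ A, a⁻¹ * b ∈ H → a⁻¹ * b ∈ K) :
    A.ncard ≤ Nat.card K * H.index := by
  refine ncard_le_mul_card_of_ncard_fiber_le (QuotientGroup.mk : G → G ⧸ H) A fun x ↦ ?_
  rcases {b ∈ A | (b : G ⧸ H) = x}.eq_empty_or_nonempty with hempty | ⟨a, haA, hax⟩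
  · simp [hempty]
  · refine Set.ncard_le_ncard_of_injOn (a⁻¹ * ·) ?_ (mul_right_injective a⁻¹).injOn
      (Set.toFinite (K : Set G))
    rintro b ⟨hbA, hbx⟩
    exact hA a haA b hbA (QuotientGroup.eq.mp (hax.trans hbx.symm))

end Counting

section Singer

theorem eq_algebraMap_of_leftMulMatrix_mulVec_eq_smul {ι R S : Type*} [Fintype ι]
    [DecidableEq ι] [CommRing R] [Ring S] [NoZeroDivisors S] [Algebra R S] (b : Basis ι R S)
    {x : S} {k : R} {w : ι → R} (hw : w ≠ 0)
    (h : Algebra.leftMulMatrix b x *ᵥ w = k • w) : x = algebraMap R S k := by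
  set y : S := b.equivFun.symm w
  have hwy : w = b.repr y := (b.equivFun.apply_symm_apply w).symm
  have hy : y ≠ 0 := b.equivFun.symm.map_ne_zero_iff.mpr hw
  have hmul : x * y = k • y := by
    apply b.equivFun.injective
    rw [hwy, Algebra.leftMulMatrix_mulVec_repr] at h
    exact h.trans (map_smul b.equivFun k y).symm
  exact mul_right_cancel₀ hy (hmul.trans (Algebra.smul_def k y))

variable {ι F K : Type*} [Fintype ι] [DecidableEq ι] [Field F] [Field K] [Algebra F K]
  (b : Basis ι F K)

/-- The subgroup of `GL(ι, F)` of multiplications by nonzero elements of the field extension `K`,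
written in the basis `b`; for finite fields it is the group generated by a Singer cycle. -/
noncomputable def singerSubgroup : Subgroup (GL ι F) :=
  (Units.map (Algebra.leftMulMatrix b : K →* Matrix ι ι F)).range

theorem card_singerSubgroup : Nat.card (singerSubgroup b) = Nat.card K - 1 := by
  have hinj : Function.Injective (Units.map (Algebra.leftMulMatrix b : K →* Matrix ι ι F)) :=
    Units.map_injective (Algebra.leftMulMatrix_injective b)
  exact (Nat.card_range_of_injective hinj).trans (Nat.card_units K)

theorem mem_range_scalar_of_mem_singerSubgroup {g : GL ι F} (hg : g ∈ singerSubgroup b)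
    {w : ι → F} (hw : w ≠ 0) {k : F} (h : (g : Matrix ι ι F) *ᵥ w = k • w) :
    g ∈ (GeneralLinearGroup.scalar ι : Fˣ →* GL ι F).range := by
  obtain ⟨x, rfl⟩ := hg
  have hx : (x : K) = algebraMap F K k := eq_algebraMap_of_leftMulMatrix_mulVec_eq_smul b hw h
  have hk : k ≠ 0 := by
    rintro rfl
    exact x.ne_zero (hx.trans (map_zero _))
  refine ⟨Units.mk0 k hk, Units.ext ?_⟩
  change Matrix.scalar ι k = Algebra.leftMulMatrix b (x : K)
  rw [hx, AlgHom.commutes]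
  rfl

end Singer

section FiniteField

theorem exists_field_extension_basis (F : Type*) [Field F] [Finite F] (n : ℕ) [NeZero n] :
    ∃ (K : Type) (_ : Field K) (_ : Algebra F K), Nonempty (Basis (Fin n) F K) := by
  obtain ⟨p, _⟩ := CharP.exists F
  have : Fact p.Prime := ⟨CharP.char_is_prime F p⟩
  exact ⟨FiniteField.Extension F p n, inferInstance, inferInstance,
    ⟨finBasisOfFinrankEq F _ (FiniteField.finrank_extension F p n)⟩⟩

variable {F : Type*} [Field F] [Fintype F] {n : ℕ} [NeZero n]

theorem card_GL_eq_mul_prod_Ico :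
    Nat.card (GL (Fin n) F) = (Fintype.card F ^ n - 1) *
      ∏ i ∈ Finset.Ico 1 n, (Fintype.card F ^ n - Fintype.card F ^ i) := by
  rw [card_GL_field, ← Finset.prod_range (fun i ↦ Fintype.card F ^ n - Fintype.card F ^ i),
    Finset.range_eq_Ico, Finset.prod_eq_prod_Ico_succ_bot (NeZero.pos n), pow_zero]

theorem index_singerSubgroup {K : Type*} [Field K] [Algebra F K] (b : Basis (Fin n) F K) :
    (singerSubgroup b).index =
      ∏ i ∈ Finset.Ico 1 n, (Fintype.card F ^ n - Fintype.card F ^ i) := by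
  have hK : Nat.card K = Fintype.card F ^ n := by
    rw [Nat.card_congr b.equivFun.toEquiv]
    simp
  have hpos : 0 < Fintype.card F ^ n - 1 :=
    Nat.sub_pos_of_lt (Nat.one_lt_pow (NeZero.ne n) Fintype.one_lt_card)
  apply Nat.eq_of_mul_eq_mul_left hpos
  rw [← card_GL_eq_mul_prod_Ico, ← hK, ← card_singerSubgroup b, Subgroup.card_mul_index]

theorem ncard_le_of_forall_exists_mulVec_eq_smul_mulVec {A : Set (GL (Fin n) F)}
    (hA : ∀ M ∈ A, ∀ N ∈ A, ∃ w : Fin n → F, w ≠ 0 ∧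
      ∃ k : F, (M : Matrix (Fin n) (Fin n) F) *ᵥ w = k • (N : Matrix (Fin n) (Fin n) F) *ᵥ w) :
    A.ncard ≤ (Fintype.card F - 1) *
      ∏ i ∈ Finset.Ico 1 n, (Fintype.card F ^ n - Fintype.card F ^ i) := by
  obtain ⟨K, _, _, ⟨b⟩⟩ := exists_field_extension_basis F n
  have hscalar : Nat.card (GeneralLinearGroup.scalar (Fin n) : Fˣ →* GL (Fin n) F).range ≤
      Fintype.card F - 1 := by
    rw [← Nat.card_eq_fintype_card, ← Nat.card_units]
    exact Finite.card_range_le _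
  rw [← index_singerSubgroup b]
  refine (ncard_le_card_mul_index (singerSubgroup b)
    (GeneralLinearGroup.scalar (Fin n)).range fun N hN M hM hNM ↦ ?_).trans
    (Nat.mul_le_mul_right _ hscalar)
  obtain ⟨w, hw, k, hk⟩ := hA M hM N hN
  refine mem_range_scalar_of_mem_singerSubgroup b hNM hw (k := k) ?_
  rw [Units.val_mul, ← mulVec_mulVec, hk, mulVec_smul, mulVec_mulVec, Units.inv_mul, one_mulVec]

end FiniteField

section AffineLine

variable {R V W : Type*} [Ring R] [AddCommGroup V] [Module R V] [AddCommGroup W] [Module R W]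

variable (R) in
/-- The line through `u` with direction `w`, degenerating to the point `u` if `w = 0`; this is
`IsAffineLine` in arbitrary modules, with the base point and the direction made explicit. -/
def affineLine (u w : V) : Set V :=
  {p | ∃ t : R, p = u + t • w}

theorem exists_apply_eq_smul_apply_of_image_affineLine_eq {f g : V →ₗ[R] W} {y z : W} {u w : V}
    (h : (fun v ↦ f v + y) '' affineLine R u w = (fun v ↦ g v + z) '' affineLine R u w) :
    ∃ k : R, f w = k • g w := by
  have hparam (t : R) : ∃ s : R, f u + t • f w + y = g u + s • g w + z := by
    have hmem : f (u + t • w) + y ∈ (fun v ↦ g v + z) '' affineLine R u w :=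
      h ▸ Set.mem_image_of_mem (fun v ↦ f v + y) ⟨t, rfl⟩
    obtain ⟨_, ⟨s, rfl⟩, hs⟩ := hmem
    exact ⟨s, by simpa only [map_add, map_smul] using hs.symm⟩
  obtain ⟨s₀, h₀⟩ := hparam 0
  obtain ⟨s₁, h₁⟩ := hparam 1
  refine ⟨s₁ - s₀, ?_⟩
  calc f w = (f u + (1 : R) • f w + y) - (f u + (0 : R) • f w + y) := by
        rw [one_smul, zero_smul]; abel
    _ = (g u + s₁ • g w + z) - (g u + s₀ • g w + z) := by rw [h₀, h₁]
    _ = (s₁ - s₀) • g w := by rw [sub_smul]; abel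

end AffineLine

theorem agl2_intersecting_upper_bound_general {F : Type*} [Field F] [Fintype F] {n : ℕ} [NeZero n]
    {𝓕 : Set ((Fin n → F) → (Fin n → F))}
    (hmem : ∀ f ∈ 𝓕, ∃ (M : GL (Fin n) F) (z : Fin n → F),
      f = fun v ↦ (M : Matrix (Fin n) (Fin n) F) *ᵥ v + z)
    (hint : ∀ f ∈ 𝓕, ∀ g ∈ 𝓕, ∃ u w : Fin n → F, w ≠ 0 ∧
      f '' affineLine F u w = g '' affineLine F u w) :
    𝓕.ncard ≤ (Fintype.card F - 1) *
      (∏ i ∈ Finset.Ico 1 n, (Fintype.card F ^ n - Fintype.card F ^ i)) * Fintype.card F ^ n := by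
  have hcard : Nat.card (Fin n → F) = Fintype.card F ^ n := by simp
  refine (ncard_le_mul_card_of_ncard_fiber_le (fun f ↦ f 0) 𝓕 fun z ↦ ?_).trans_eq
    (congrArg _ hcard)
  let affine (M : GL (Fin n) F) (v : Fin n → F) : Fin n → F := M.val *ᵥ v + z
  have hfiber : {f ∈ 𝓕 | f 0 = z} ⊆ affine '' {M | affine M ∈ 𝓕} := by
    rintro f ⟨hf, hfz⟩
    obtain ⟨M, y, rfl⟩ := hmem f hf
    obtain rfl : y = z := by simpa using hfz
    exact ⟨M, hf, rfl⟩
  refine (Set.ncard_le_ncard hfiber).trans <| (Set.ncard_image_le (Set.toFinite _)).trans <|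
    ncard_le_of_forall_exists_mulVec_eq_smul_mulVec fun M hM N hN ↦ ?_
  obtain ⟨u, w, hw, himage⟩ := hint _ hM _ hN
  exact ⟨w, hw, exists_apply_eq_smul_apply_of_image_affineLine_eq
    (f := M.val.mulVecLin) (g := N.val.mulVecLin) himage⟩

/-- **Upper bound for intersecting sets in AGL(2,q) acting on lines (Theorem 1.2).**
If `𝓕` is a set of affine maps `v ↦ M v + z` (with `M ∈ GL(2,F)`) which is intersecting
for the action on the affine lines of `F²`, then `|𝓕| ≤ q³(q-1)²`. -/
theorem agl2_intersecting_upper_bound (q : ℕ) (hq : IsPrimePow q)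
    (F : Type*) [Field F] [Fintype F] (hF : Fintype.card F = q)
    (𝓕 : Set ((Fin 2 → F) → (Fin 2 → F)))
    (hmem : ∀ f ∈ 𝓕, ∃ (M : GL (Fin 2) F) (z : Fin 2 → F),
      f = fun v => (M : Matrix (Fin 2) (Fin 2) F).mulVec v + z)
    (hint : ∀ f ∈ 𝓕, ∀ g ∈ 𝓕, ∃ ℓ : Set (Fin 2 → F), IsAffineLine ℓ ∧ f '' ℓ = g '' ℓ) :
    𝓕.ncard ≤ q ^ 3 * (q - 1) ^ 2 := by
  have hbound := agl2_intersecting_upper_bound_general hmem fun f hf g hg ↦ by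
    obtain ⟨_, ⟨u, w, hw, rfl⟩, himage⟩ := hint f hf g hg
    exact ⟨u, w, hw, himage⟩
  have hprod : ∏ i ∈ Finset.Ico 1 2, (q ^ 2 - q ^ i) = q * (q - 1) := by
    simp [Nat.mul_sub, sq]
  rw [hF, hprod] at hbound
  exact hbound.trans_eq (by ring)
end
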